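/- Let L ≥ 1 and m_1, …, m_L ≥ 1, and consider the product X = SH_{m_1} × … × SH_{m_L} of Siegel upper half spaces. Let x = (x_1,…,x_L), a = (a_1,…,a_L), p = (p_1,…,p_L) ∈ X with x ≠ p and a_j ≠ iI_{m_j} for at least one j. Write A_j = log(φ(a_j) φ(a_j)ᵀ) and, for q = (q_1,…,q_L) ∈ X, M_j(q) = log(φ(p_j)^{-1} φ(q_j) φ(q_j)ᵀ φ(p_j)^{-ᵀ}). Let the hyperplane be H = { q ∈ X : Σ_{j=1}^L ⟨M_j(q), A_j⟩ = 0 } and let C = sup { Σ_j ⟨M_j(q), M_j(x)⟩ / ( sqrt(Σ_j ‖M_j(q)‖²) · sqrt(Σ_j ‖M_j(x)‖²) ) : q ∈ H, q ≠ p }. Then sqrt(1 − C²) · sqrt(Σ_{j=1}^L ‖M_j(x)‖²) = |Σ_{j=1}^L ⟨M_j(x), A_j⟩| / sqrt(Σ_{j=1}^L ‖A_j‖²); i.e., the point-to-hyperplane distance on the product space is given by the formula of Theorem 2 (stated here for a product of Siegel factors). -/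

import Mathlib

open Matrix

/-- Membership in the Siegel upper half space. -/
def inSH {m : ℕ} (x : Matrix (Fin m) (Fin m) ℂ) : Prop :=
  ∃ u v : Matrix (Fin m) (Fin m) ℝ, uᵀ = u ∧ v.PosDef ∧
    x = u.map ((↑) : ℝ → ℂ) + Complex.I • v.map ((↑) : ℝ → ℂ)

/-- Real part of a complex matrix. -/
def rePart {n : ℕ} (x : Matrix (Fin n) (Fin n) ℂ) : Matrix (Fin n) (Fin n) ℝ :=
  Matrix.of fun i j => (x i j).re

/-- Imaginary part of a complex matrix. -/
def imPart {n : ℕ} (x : Matrix (Fin n) (Fin n) ℂ) : Matrix (Fin n) (Fin n) ℝ :=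
  Matrix.of fun i j => (x i j).im

open scoped Classical in
/-- The unique symmetric positive definite square root (when it exists). -/
noncomputable def spdSqrt {n : ℕ} (v : Matrix (Fin n) (Fin n) ℝ) :
    Matrix (Fin n) (Fin n) ℝ :=
  if h : ∃ r : Matrix (Fin n) (Fin n) ℝ, r.PosDef ∧ r * r = v then h.choose else 0

open scoped Classical in
/-- The principal matrix logarithm: the unique symmetric matrix whose matrix
exponential is the given symmetric positive definite matrix. -/
noncomputable def spdLog {n : Type*} [Fintype n] [DecidableEq n]
    (P : Matrix n n ℝ) : Matrix n n ℝ :=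
  if h : ∃ L : Matrix n n ℝ, Lᵀ = L ∧ NormedSpace.exp L = P then h.choose else 0

/-- The representative φ(x) = [[v^{1/2}, u v^{-1/2}], [0, v^{-1/2}]] of
x = u + iv. -/
noncomputable def phiMap {n : ℕ} (x : Matrix (Fin n) (Fin n) ℂ) :
    Matrix (Fin n ⊕ Fin n) (Fin n ⊕ Fin n) ℝ :=
  Matrix.fromBlocks (spdSqrt (imPart x)) (rePart x * (spdSqrt (imPart x))⁻¹)
    0 (spdSqrt (imPart x))⁻¹

/-- The Frobenius inner product ⟨A,B⟩ = Tr(AᵀB). -/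
noncomputable def frobInner {n : Type*} [Fintype n] (A B : Matrix n n ℝ) : ℝ :=
  Matrix.trace (Aᵀ * B)

/-- The Frobenius norm. -/
noncomputable def frobNorm {n : Type*} [Fintype n] (A : Matrix n n ℝ) : ℝ :=
  Real.sqrt (Matrix.trace (Aᵀ * A))

/-- M_j(q) = log(φ(p_j)⁻¹ φ(q_j) φ(q_j)ᵀ φ(p_j)⁻ᵀ). -/
noncomputable def Mlog {m : ℕ} (p q : Matrix (Fin m) (Fin m) ℂ) :
    Matrix (Fin m ⊕ Fin m) (Fin m ⊕ Fin m) ℝ :=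
  spdLog ((phiMap p)⁻¹ * phiMap q * (phiMap q)ᵀ * ((phiMap p)⁻¹)ᵀ)


section LogLemmas
open scoped Matrix.Norms.L2Operator MatrixOrder

lemma aux_exp_inj {n : Type*} [Fintype n] [DecidableEq n] {S T : Matrix n n ℝ}
    (hS : Sᵀ = S) (hT : Tᵀ = T) (h : NormedSpace.exp S = NormedSpace.exp T) : S = T := by
  have h1 : IsSelfAdjoint S := by
    rw [isSelfAdjoint_iff, star_eq_conjTranspose, conjTranspose_eq_transpose_of_trivial, hS]
  have h2 : IsSelfAdjoint T := by
    rw [isSelfAdjoint_iff, star_eq_conjTranspose, conjTranspose_eq_transpose_of_trivial, hT]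
  rw [← CFC.log_exp S h1, ← CFC.log_exp T h2, h]

lemma aux_exists_log {n : Type*} [Fintype n] [DecidableEq n] {P : Matrix n n ℝ}
    (hP : P.PosDef) : ∃ L : Matrix n n ℝ, Lᵀ = L ∧ NormedSpace.exp L = P := by
  refine ⟨CFC.log P, ?_, CFC.exp_log P hP.isStrictlyPositive⟩
  have : IsSelfAdjoint (CFC.log P) := IsSelfAdjoint.log
  rwa [isSelfAdjoint_iff, star_eq_conjTranspose, conjTranspose_eq_transpose_of_trivial] at this

end LogLemmas

lemma aux_spdLog_spec {n : Type*} [Fintype n] [DecidableEq n] {P : Matrix n n ℝ}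
    (hP : P.PosDef) : (spdLog P)ᵀ = spdLog P ∧ NormedSpace.exp (spdLog P) = P := by
  unfold spdLog
  rw [dif_pos (aux_exists_log hP)]
  exact (aux_exists_log hP).choose_spec

lemma aux_spdLog_exp {n : Type*} [Fintype n] [DecidableEq n] {S : Matrix n n ℝ}
    (hS : Sᵀ = S) : spdLog (NormedSpace.exp S) = S := by
  have h : ∃ L : Matrix n n ℝ, Lᵀ = L ∧ NormedSpace.exp L = NormedSpace.exp S := ⟨S, hS, rfl⟩
  unfold spdLog
  rw [dif_pos h]
  exact aux_exp_inj h.choose_spec.1 hS h.choose_spec.2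

lemma aux_mul_transpose_posDef {n : Type*} [Fintype n] [DecidableEq n] {g : Matrix n n ℝ}
    (hg : IsUnit g) : (g * gᵀ).PosDef := by
  have := PosDef.mul_conjTranspose_self g (Matrix.vecMul_injective_of_isUnit hg)
  rwa [conjTranspose_eq_transpose_of_trivial] at this

lemma aux_exp_half {n : Type*} [Fintype n] [DecidableEq n] (S : Matrix n n ℝ) :
    NormedSpace.exp ((1/2 : ℝ) • S) * NormedSpace.exp ((1/2 : ℝ) • S) = NormedSpace.exp S := by
  rw [← Matrix.exp_add_of_commute _ _ (Commute.refl _), ← add_smul]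
  norm_num

lemma aux_exp_posDef {n : Type*} [Fintype n] [DecidableEq n] {S : Matrix n n ℝ}
    (hS : Sᵀ = S) : (NormedSpace.exp S).PosDef := by
  have := aux_mul_transpose_posDef (Matrix.isUnit_exp ((1/2 : ℝ) • S))
  rwa [← Matrix.exp_transpose, transpose_smul, hS, aux_exp_half] at this

lemma aux_spdSqrt_spec {n : ℕ} {v : Matrix (Fin n) (Fin n) ℝ} (hv : v.PosDef) :
    (spdSqrt v).PosDef ∧ spdSqrt v * spdSqrt v = v := by
  have h : ∃ r : Matrix (Fin n) (Fin n) ℝ, r.PosDef ∧ r * r = v := by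
    obtain ⟨L, hL, he⟩ := aux_exists_log hv
    exact ⟨NormedSpace.exp ((1/2 : ℝ) • L), aux_exp_posDef (by rw [transpose_smul, hL]),
      by rw [aux_exp_half, he]⟩
  unfold spdSqrt
  rw [dif_pos h]
  exact h.choose_spec

lemma aux_inSH {m : ℕ} {x : Matrix (Fin m) (Fin m) ℂ} (hx : inSH x) :
    (rePart x)ᵀ = rePart x ∧ (imPart x).PosDef ∧
      x = (rePart x).map ((↑) : ℝ → ℂ) + Complex.I • (imPart x).map ((↑) : ℝ → ℂ) := by
  obtain ⟨u, v, hu, hv, rfl⟩ := hx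
  have h1 : rePart (u.map ((↑) : ℝ → ℂ) + Complex.I • v.map ((↑) : ℝ → ℂ)) = u := by
    ext i j; simp [rePart]
  have h2 : imPart (u.map ((↑) : ℝ → ℂ) + Complex.I • v.map ((↑) : ℝ → ℂ)) = v := by
    ext i j; simp [imPart]
  rw [h1, h2]
  exact ⟨hu, hv, rfl⟩

lemma aux_phi_mul {m : ℕ} {x : Matrix (Fin m) (Fin m) ℂ} (hx : inSH x) :
    phiMap x * (phiMap x)ᵀ = fromBlocks
      (imPart x + rePart x * (imPart x)⁻¹ * rePart x) (rePart x * (imPart x)⁻¹)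
      ((imPart x)⁻¹ * rePart x) (imPart x)⁻¹ := by
  obtain ⟨hu, hv, -⟩ := aux_inSH hx
  obtain ⟨hr, hrr⟩ := aux_spdSqrt_spec hv
  have hrt : (spdSqrt (imPart x))ᵀ = spdSqrt (imPart x) := by
    rw [← conjTranspose_eq_transpose_of_trivial]; exact hr.isHermitian
  have hi : (spdSqrt (imPart x))⁻¹ * (spdSqrt (imPart x))⁻¹ = (imPart x)⁻¹ := by
    rw [← Matrix.mul_inv_rev, hrr]
  unfold phiMap
  rw [fromBlocks_transpose, fromBlocks_multiply, transpose_mul, transpose_nonsing_inv, hrt, hu]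
  simp only [transpose_zero, Matrix.mul_zero, Matrix.zero_mul, zero_add, hrr]
  rw [hi, ← Matrix.mul_assoc, Matrix.mul_assoc (rePart x), hi, ← Matrix.mul_assoc, hi]

lemma aux_phi_mem {m : ℕ} {x : Matrix (Fin m) (Fin m) ℂ} (hx : inSH x) :
    phiMap x ∈ symplecticGroup (Fin m) ℝ := by
  obtain ⟨hu, hv, -⟩ := aux_inSH hx
  obtain ⟨hr, hrr⟩ := aux_spdSqrt_spec hv
  have hrt : (spdSqrt (imPart x))ᵀ = spdSqrt (imPart x) := by
    rw [← conjTranspose_eq_transpose_of_trivial]; exact hr.isHermitian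
  have hd : IsUnit (spdSqrt (imPart x)).det := (Matrix.isUnit_iff_isUnit_det _).1 hr.isUnit
  rw [SymplecticGroup.mem_iff]
  unfold phiMap J
  rw [fromBlocks_transpose, fromBlocks_multiply, fromBlocks_multiply, transpose_mul,
    transpose_nonsing_inv, hrt, hu]
  simp [Matrix.mul_assoc, Matrix.mul_nonsing_inv _ hd, Matrix.nonsing_inv_mul _ hd,
    Matrix.mul_nonsing_inv_cancel_left _ _ hd, Matrix.nonsing_inv_mul_cancel_left _ _ hd]

lemma aux_inv_mem {m : ℕ} {g : Matrix (Fin m ⊕ Fin m) (Fin m ⊕ Fin m) ℝ}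
    (hg : g ∈ symplecticGroup (Fin m) ℝ) : g⁻¹ ∈ symplecticGroup (Fin m) ℝ := by
  have := (⟨g, hg⟩ : symplecticGroup (Fin m) ℝ)⁻¹.2
  rwa [SymplecticGroup.coe_inv'] at this

lemma aux_isUnit {m : ℕ} {g : Matrix (Fin m ⊕ Fin m) (Fin m ⊕ Fin m) ℝ}
    (hg : g ∈ symplecticGroup (Fin m) ℝ) : IsUnit g :=
  (Matrix.isUnit_iff_isUnit_det _).2 (SymplecticGroup.symplectic_det hg)

/-- The symmetric part of the symplectic Lie algebra. -/
def auxV (m : ℕ) : Submodule ℝ (Matrix (Fin m ⊕ Fin m) (Fin m ⊕ Fin m) ℝ) where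
  carrier := {S | Sᵀ = S ∧ J (Fin m) ℝ * S = -S * J (Fin m) ℝ}
  zero_mem' := by simp
  add_mem' := by
    rintro S T ⟨h1, h2⟩ ⟨h3, h4⟩
    refine ⟨by rw [transpose_add, h1, h3], ?_⟩
    rw [Matrix.mul_add, h2, h4, neg_add, Matrix.add_mul]
  smul_mem' := by
    rintro c S ⟨h1, h2⟩
    refine ⟨by rw [transpose_smul, h1], ?_⟩
    rw [Matrix.mul_smul, h2, ← smul_neg, Matrix.smul_mul]

lemma aux_J_unit (m : ℕ) : IsUnit (J (Fin m) ℝ) :=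
  (Matrix.isUnit_iff_isUnit_det _).2 (isUnit_det_J _ _)

lemma aux_exp_conj_J {m : ℕ} (S : Matrix (Fin m ⊕ Fin m) (Fin m ⊕ Fin m) ℝ) :
    NormedSpace.exp (J (Fin m) ℝ * S * (J (Fin m) ℝ)⁻¹) =
      J (Fin m) ℝ * NormedSpace.exp S * (J (Fin m) ℝ)⁻¹ :=
  Matrix.exp_conj _ _ (aux_J_unit m)

lemma aux_exp_mem {m : ℕ} {S : Matrix (Fin m ⊕ Fin m) (Fin m ⊕ Fin m) ℝ}
    (hS : S ∈ auxV m) : NormedSpace.exp S ∈ symplecticGroup (Fin m) ℝ := by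
  obtain ⟨h1, h2⟩ := hS
  have hJ := isUnit_det_J (Fin m) ℝ
  have hE := (Matrix.isUnit_iff_isUnit_det _).1 (Matrix.isUnit_exp S)
  have h := aux_exp_conj_J S
  rw [h2, Matrix.mul_nonsing_inv_cancel_right _ _ hJ, Matrix.exp_neg] at h
  have h' : (NormedSpace.exp S)⁻¹ * J (Fin m) ℝ = J (Fin m) ℝ * NormedSpace.exp S := by
    rw [h, Matrix.nonsing_inv_mul_cancel_right _ _ hJ]
  rw [SymplecticGroup.mem_iff, ← Matrix.exp_transpose, h1, Matrix.mul_assoc, ← h',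
    Matrix.mul_nonsing_inv_cancel_left _ _ hE]

lemma aux_mem_of_exp {m : ℕ} {S : Matrix (Fin m ⊕ Fin m) (Fin m ⊕ Fin m) ℝ}
    (h1 : Sᵀ = S) (hE : NormedSpace.exp S ∈ symplecticGroup (Fin m) ℝ) : S ∈ auxV m := by
  refine ⟨h1, ?_⟩
  have hJ := isUnit_det_J (Fin m) ℝ
  have hEu := (Matrix.isUnit_iff_isUnit_det _).1 (Matrix.isUnit_exp S)
  rw [SymplecticGroup.mem_iff, ← Matrix.exp_transpose, h1] at hE
  have h2 : J (Fin m) ℝ * S * (J (Fin m) ℝ)⁻¹ = -S := by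
    apply aux_exp_inj
    · rw [transpose_mul, transpose_mul, transpose_nonsing_inv, J_transpose, h1, J_inv]
      rw [← J_transpose, ← transpose_nonsing_inv, J_inv, transpose_neg, J_transpose, neg_neg,
        Matrix.mul_assoc]
    · rw [transpose_neg, h1]
    · rw [aux_exp_conj_J, Matrix.exp_neg]
      have : J (Fin m) ℝ * NormedSpace.exp S = (NormedSpace.exp S)⁻¹ * J (Fin m) ℝ := by
        conv_rhs => rw [← hE]
        rw [Matrix.mul_assoc, Matrix.nonsing_inv_mul_cancel_left _ _ hEu]
      rw [this, Matrix.mul_nonsing_inv_cancel_right _ _ hJ]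
  rw [← h2, Matrix.nonsing_inv_mul_cancel_right _ _ hJ]

lemma aux_log_mem {m : ℕ} {g : Matrix (Fin m ⊕ Fin m) (Fin m ⊕ Fin m) ℝ}
    (hg : g ∈ symplecticGroup (Fin m) ℝ) : spdLog (g * gᵀ) ∈ auxV m := by
  obtain ⟨h1, h2⟩ := aux_spdLog_spec (aux_mul_transpose_posDef (aux_isUnit hg))
  apply aux_mem_of_exp h1
  rw [h2]
  exact mul_mem hg (SymplecticGroup.transpose_mem hg)

lemma aux_Mlog_mem {m : ℕ} {p q : Matrix (Fin m) (Fin m) ℂ} (hp : inSH p) (hq : inSH q) :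
    Mlog p q ∈ auxV m := by
  have := aux_log_mem (mul_mem (aux_inv_mem (aux_phi_mem hp)) (aux_phi_mem hq))
  rwa [transpose_mul, ← Matrix.mul_assoc] at this

lemma aux_Mlog_self {m : ℕ} {p : Matrix (Fin m) (Fin m) ℂ} (hp : inSH p) :
    Mlog p p = 0 := by
  have hd := SymplecticGroup.symplectic_det (aux_phi_mem hp)
  unfold Mlog
  rw [Matrix.nonsing_inv_mul _ hd, Matrix.one_mul, ← transpose_mul, Matrix.nonsing_inv_mul _ hd,
    transpose_one, ← NormedSpace.exp_zero, aux_spdLog_exp transpose_zero]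

lemma aux_log_ne_zero {m : ℕ} {a : Matrix (Fin m) (Fin m) ℂ} (ha : inSH a)
    (h : a ≠ Complex.I • (1 : Matrix (Fin m) (Fin m) ℂ)) :
    spdLog (phiMap a * (phiMap a)ᵀ) ≠ 0 := by
  intro h0
  apply h
  obtain ⟨-, h2⟩ := aux_spdLog_spec (aux_mul_transpose_posDef (aux_isUnit (aux_phi_mem ha)))
  rw [h0, NormedSpace.exp_zero, aux_phi_mul ha, ← fromBlocks_one, fromBlocks_inj] at h2
  obtain ⟨hu, hv, hx⟩ := aux_inSH ha
  obtain ⟨-, e1, -, e2⟩ := h2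
  have hd := (Matrix.isUnit_iff_isUnit_det _).1 hv.isUnit
  have e3 : imPart a = 1 := by
    have := Matrix.mul_nonsing_inv _ hd
    rwa [← e2, Matrix.mul_one] at this
  rw [← e2, Matrix.mul_one] at e1
  rw [hx, e3, ← e1]
  ext i j
  simp [Matrix.one_apply]

lemma aux_exists_phi {m : ℕ} {Q : Matrix (Fin m ⊕ Fin m) (Fin m ⊕ Fin m) ℝ}
    (hQ : Q ∈ symplecticGroup (Fin m) ℝ) (hpd : Q.PosDef) :
    ∃ q, inSH q ∧ phiMap q * (phiMap q)ᵀ = Q := by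
  have hD : Q.toBlocks₂₂.PosDef := hpd.submatrix (e := Sum.inr) Sum.inr_injective
  have hQt : Qᵀ = Q := by
    rw [← conjTranspose_eq_transpose_of_trivial]; exact hpd.isHermitian
  rw [SymplecticGroup.mem_iff, hQt] at hQ
  rw [← fromBlocks_toBlocks Q] at hQ hQt
  generalize hA : Q.toBlocks₁₁ = A at *
  generalize hB : Q.toBlocks₁₂ = B at *
  generalize hC : Q.toBlocks₂₁ = C at *
  generalize hDD : Q.toBlocks₂₂ = D at *
  have hQe : Q = fromBlocks A B C D := by
    rw [← hA, ← hB, ← hC, ← hDD, fromBlocks_toBlocks]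
  rw [fromBlocks_transpose, fromBlocks_inj] at hQt
  obtain ⟨-, t1, t2, t3⟩ := hQt
  unfold J at hQ
  rw [fromBlocks_multiply, fromBlocks_multiply, fromBlocks_inj] at hQ
  simp at hQ
  obtain ⟨-, s2, -, s4⟩ := hQ
  have hd := (Matrix.isUnit_iff_isUnit_det _).1 hD.isUnit
  have s4' : D * B = C * D := by
    rw [← sub_eq_zero, sub_eq_add_neg]; exact s4
  have s2' : A * D = 1 + B * B := by
    rw [eq_comm, ← sub_eq_zero, ← sub_eq_zero.2 s2]; abel
  have hu : D⁻¹ * C = B * D⁻¹ := by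
    have e : C = D * (B * D⁻¹) := by
      rw [← Matrix.mul_assoc, s4', Matrix.mul_assoc, Matrix.mul_nonsing_inv _ hd, Matrix.mul_one]
    rw [e, Matrix.nonsing_inv_mul_cancel_left _ _ hd]
  have hut : (B * D⁻¹)ᵀ = B * D⁻¹ := by
    rw [transpose_mul, transpose_nonsing_inv, t3, ← hu, t2]
  have hin : inSH ((B * D⁻¹).map ((↑) : ℝ → ℂ) + Complex.I • D⁻¹.map ((↑) : ℝ → ℂ)) :=
    ⟨_, _, hut, hD.inv, rfl⟩
  refine ⟨_, hin, ?_⟩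
  rw [aux_phi_mul hin]
  have h1 : rePart ((B * D⁻¹).map ((↑) : ℝ → ℂ) + Complex.I • D⁻¹.map ((↑) : ℝ → ℂ)) =
    B * D⁻¹ := by
    ext i j; simp [rePart, -Matrix.map_mul]
  have h2 : imPart ((B * D⁻¹).map ((↑) : ℝ → ℂ) + Complex.I • D⁻¹.map ((↑) : ℝ → ℂ)) =
    D⁻¹ := by
    ext i j; simp [imPart, -Matrix.map_mul]
  rw [h1, h2, Matrix.nonsing_inv_nonsing_inv _ hd, hQe, fromBlocks_inj]
  refine ⟨?_, ?_, ?_, rfl⟩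
  · have e : A = A * D * D⁻¹ := by
      rw [Matrix.mul_assoc, Matrix.mul_nonsing_inv _ hd, Matrix.mul_one]
    rw [Matrix.nonsing_inv_mul_cancel_right _ _ hd, e, s2', Matrix.add_mul, Matrix.one_mul,
      Matrix.mul_assoc]
  · rw [Matrix.nonsing_inv_mul_cancel_right _ _ hd]
  · rw [← hu, Matrix.mul_nonsing_inv_cancel_left _ _ hd]

lemma aux_Mlog_surj {m : ℕ} {p : Matrix (Fin m) (Fin m) ℂ} (hp : inSH p)
    {S : Matrix (Fin m ⊕ Fin m) (Fin m ⊕ Fin m) ℝ} (hS : S ∈ auxV m) :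
    ∃ q, inSH q ∧ Mlog p q = S := by
  have hm := aux_phi_mem hp
  have hd := SymplecticGroup.symplectic_det hm
  obtain ⟨q, hq, he⟩ := aux_exists_phi
    (Q := phiMap p * NormedSpace.exp S * (phiMap p)ᵀ)
    (mul_mem (mul_mem hm (aux_exp_mem hS)) (SymplecticGroup.transpose_mem hm)) (by
      have := (aux_exp_posDef hS.1).mul_mul_conjTranspose_same (B := phiMap p)
        (Matrix.vecMul_injective_of_isUnit (aux_isUnit hm))
      rwa [conjTranspose_eq_transpose_of_trivial] at this)
  refine ⟨q, hq, ?_⟩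
  unfold Mlog
  rw [Matrix.mul_assoc _ (phiMap q), he, Matrix.mul_assoc (phiMap p),
    Matrix.nonsing_inv_mul_cancel_left _ _ hd, Matrix.mul_assoc, ← transpose_mul,
    Matrix.nonsing_inv_mul _ hd, transpose_one, Matrix.mul_one, aux_spdLog_exp hS.1]

lemma aux_geom {E : Type*} [NormedAddCommGroup E] [InnerProductSpace ℝ E]
    (X A : E) (hA : A ≠ 0) (s : Set ℝ)
    (hs1 : ∀ c ∈ s, ∃ Y : E, inner ℝ Y A = 0 ∧ c = inner ℝ Y X / (‖Y‖ * ‖X‖))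
    (hs2 : ∀ Y : E, Y = X - (inner ℝ X A / ‖A‖ ^ 2) • A → inner ℝ Y A = 0 → Y ≠ 0 →
      inner ℝ Y X / (‖Y‖ * ‖X‖) ∈ s) :
    Real.sqrt (1 - (sSup s) ^ 2) * ‖X‖ = |inner ℝ X A| / ‖A‖ := by
  have hA' : 0 < ‖A‖ := norm_pos_iff.2 hA
  by_cases hX : X = 0
  · simp [hX]
  have hX' : 0 < ‖X‖ := norm_pos_iff.2 hX
  set t := inner ℝ X A / ‖A‖ ^ 2 with ht
  set Z := X - t • A with hZ
  have hZA : inner ℝ Z A = 0 := by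
    rw [hZ, inner_sub_left, inner_smul_left, real_inner_self_eq_norm_sq, ht]
    simp only [conj_trivial]
    field_simp
    ring
  have hXZ : X = Z + t • A := by rw [hZ]; abel
  have hYX : ∀ Y : E, inner ℝ Y A = 0 → inner ℝ Y X = inner ℝ Y Z := by
    intro Y hY
    conv_lhs => rw [hXZ]
    rw [inner_add_right, inner_smul_right, hY]; simp
  have hnorm : ‖X‖ ^ 2 = ‖Z‖ ^ 2 + t ^ 2 * ‖A‖ ^ 2 := by
    conv_lhs => rw [hXZ]
    rw [norm_add_sq_real, inner_smul_right, hZA, norm_smul, mul_pow, Real.norm_eq_abs, sq_abs]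
    ring
  have hsup : sSup s = ‖Z‖ / ‖X‖ := by
    have hub : ∀ c ∈ s, c ≤ ‖Z‖ / ‖X‖ := by
      intro c hc
      obtain ⟨Y, hY, rfl⟩ := hs1 c hc
      by_cases hY0 : Y = 0
      · simp only [hY0, inner_zero_left, zero_div]; positivity
      have hY' : 0 < ‖Y‖ := norm_pos_iff.2 hY0
      rw [hYX Y hY, div_le_div_iff₀ (by positivity) hX']
      have := real_inner_le_norm Y Z
      nlinarith
    by_cases hZ0 : Z = 0
    · have hs0 : ∀ c ∈ s, c = 0 := by
        intro c hc
        obtain ⟨Y, hY, rfl⟩ := hs1 c hc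
        rw [hYX Y hY, hZ0]; simp
      rw [hZ0]
      simp only [norm_zero, zero_div]
      rcases s.eq_empty_or_nonempty with h | ⟨c, hc⟩
      · rw [h, Real.sSup_empty]
      · have : s = {0} := by
          ext d
          refine ⟨fun hd => hs0 d hd, ?_⟩
          rintro rfl
          rw [← hs0 c hc]; exact hc
        rw [this, csSup_singleton]
    · have hZ' : 0 < ‖Z‖ := norm_pos_iff.2 hZ0
      have hm := hs2 Z hZ hZA hZ0
      rw [hYX Z hZA, real_inner_self_eq_norm_sq, sq, mul_div_mul_left _ _ hZ'.ne'] at hm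
      exact IsGreatest.csSup_eq ⟨hm, hub⟩
  rw [hsup]
  have h1 : 1 - (‖Z‖ / ‖X‖) ^ 2 = (|inner ℝ X A| / ‖A‖ / ‖X‖) ^ 2 := by
    rw [div_pow, div_pow, div_pow, sq_abs]
    have : t ^ 2 * ‖A‖ ^ 2 = inner ℝ X A ^ 2 / ‖A‖ ^ 2 := by
      rw [ht]; field_simp
    rw [← this]
    field_simp
    linarith
  rw [h1, Real.sqrt_sq (by positivity)]
  field_simp

/-- Flatten a tuple of matrices into a Euclidean space. -/
noncomputable def auxT {L : ℕ} (mdim : Fin L → ℕ)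
    (Y : (j : Fin L) → Matrix (Fin (mdim j) ⊕ Fin (mdim j)) (Fin (mdim j) ⊕ Fin (mdim j)) ℝ) :
    EuclideanSpace ℝ
      (Σ j : Fin L, (Fin (mdim j) ⊕ Fin (mdim j)) × (Fin (mdim j) ⊕ Fin (mdim j))) :=
  WithLp.toLp 2 fun k => Y k.1 k.2.2 k.2.1

lemma aux_frobInner {n : Type*} [Fintype n] (A B : Matrix n n ℝ) :
    frobInner A B = ∑ k : n × n, A k.2 k.1 * B k.2 k.1 := by
  rw [Fintype.sum_prod_type]
  simp [frobInner, Matrix.trace, Matrix.mul_apply]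

lemma auxT_inner {L : ℕ} (mdim : Fin L → ℕ)
    (Y Z : (j : Fin L) → Matrix (Fin (mdim j) ⊕ Fin (mdim j)) (Fin (mdim j) ⊕ Fin (mdim j)) ℝ) :
    inner ℝ (auxT mdim Y) (auxT mdim Z) = ∑ j, frobInner (Y j) (Z j) := by
  simp only [aux_frobInner]
  rw [PiLp.inner_apply, Fintype.sum_sigma]
  simp [auxT, mul_comm]

lemma aux_frobNorm_sq {n : Type*} [Fintype n] (A : Matrix n n ℝ) :
    frobNorm A ^ 2 = frobInner A A := by
  have h : 0 ≤ frobInner A A := by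
    rw [aux_frobInner]
    exact Finset.sum_nonneg fun k _ => mul_self_nonneg _
  exact Real.sq_sqrt h

lemma auxT_norm {L : ℕ} (mdim : Fin L → ℕ)
    (Y : (j : Fin L) → Matrix (Fin (mdim j) ⊕ Fin (mdim j)) (Fin (mdim j) ⊕ Fin (mdim j)) ℝ) :
    Real.sqrt (∑ j, frobNorm (Y j) ^ 2) = ‖auxT mdim Y‖ := by
  simp only [aux_frobNorm_sq]
  rw [← auxT_inner, real_inner_self_eq_norm_sq, Real.sqrt_sq (norm_nonneg _)]

/-- Theorem 2, for a product of Siegel factors: the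
point-to-hyperplane distance on a product X = SH_{m_1} × … × SH_{m_L}. -/
theorem point_to_hyperplane_distance_product (L : ℕ) (hL : 1 ≤ L)
    (mdim : Fin L → ℕ) (hmdim : ∀ j, 1 ≤ mdim j)
    (x a p : (j : Fin L) → Matrix (Fin (mdim j)) (Fin (mdim j)) ℂ)
    (hx : ∀ j, inSH (x j)) (ha : ∀ j, inSH (a j)) (hp : ∀ j, inSH (p j))
    (hxp : x ≠ p)
    (hai : ∃ j, a j ≠ Complex.I • (1 : Matrix (Fin (mdim j)) (Fin (mdim j)) ℂ)) :
    Real.sqrt (1 -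
        (sSup {c : ℝ |
          ∃ q : (j : Fin L) → Matrix (Fin (mdim j)) (Fin (mdim j)) ℂ,
            (∀ j, inSH (q j)) ∧
            (∑ j, frobInner (Mlog (p j) (q j))
                (spdLog (phiMap (a j) * (phiMap (a j))ᵀ))) = 0 ∧
            q ≠ p ∧
            c = (∑ j, frobInner (Mlog (p j) (q j)) (Mlog (p j) (x j))) /
                (Real.sqrt (∑ j, frobNorm (Mlog (p j) (q j)) ^ 2) *
                  Real.sqrt (∑ j, frobNorm (Mlog (p j) (x j)) ^ 2))}) ^ 2) *
      Real.sqrt (∑ j, frobNorm (Mlog (p j) (x j)) ^ 2)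
    = |∑ j, frobInner (Mlog (p j) (x j))
          (spdLog (phiMap (a j) * (phiMap (a j))ᵀ))| /
        Real.sqrt (∑ j, frobNorm (spdLog (phiMap (a j) * (phiMap (a j))ᵀ)) ^ 2) := by
  have hTn := auxT_norm mdim (fun j => Mlog (p j) (x j))
  have hTa := auxT_norm mdim (fun j => spdLog (phiMap (a j) * (phiMap (a j))ᵀ))
  have hTi := auxT_inner mdim (fun j => Mlog (p j) (x j))
    (fun j => spdLog (phiMap (a j) * (phiMap (a j))ᵀ))
  rw [hTn, hTa, ← hTi]
  apply aux_geom
  · obtain ⟨j, hj⟩ := hai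
    intro h0
    apply aux_log_ne_zero (ha j) hj
    ext i k
    exact congrArg (fun w => w.ofLp ⟨j, (k, i)⟩) h0
  · rintro c ⟨q, hq, hqa, hqp, rfl⟩
    refine ⟨auxT mdim (fun j => Mlog (p j) (q j)), ?_, ?_⟩
    · rw [auxT_inner]; exact hqa
    · rw [auxT_inner, ← auxT_norm mdim (fun j => Mlog (p j) (q j))]
  · intro Y hY hYA hY0
    set t := (inner ℝ (auxT mdim fun j => Mlog (p j) (x j))
      (auxT mdim fun j => spdLog (phiMap (a j) * (phiMap (a j))ᵀ)) /
      ‖auxT mdim fun j => spdLog (phiMap (a j) * (phiMap (a j))ᵀ)‖ ^ 2) with ht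
    have hmem : ∀ j, Mlog (p j) (x j) - t • spdLog (phiMap (a j) * (phiMap (a j))ᵀ)
        ∈ auxV (mdim j) := fun j =>
      Submodule.sub_mem _ (aux_Mlog_mem (hp j) (hx j))
        (Submodule.smul_mem _ _ (aux_log_mem (aux_phi_mem (ha j))))
    choose q hq hqe using fun j => aux_Mlog_surj (hp j) (hmem j)
    have hYq : Y = auxT mdim (fun j => Mlog (p j) (q j)) := by
      rw [hY]
      ext k
      simp [auxT, hqe]
    refine ⟨q, hq, ?_, ?_, ?_⟩
    · rw [hYq, auxT_inner] at hYA; exact hYA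
    · rintro rfl
      apply hY0
      rw [hYq]
      ext k
      simp [auxT, aux_Mlog_self (hp _)]
    · rw [hYq, auxT_inner, ← auxT_norm mdim (fun j => Mlog (p j) (q j))]
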